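/- Let (a_{u,v}) be an interesting model, with Φ and Ψ the associated automorphisms of ℂ(x,y). Then (Φ∘Ψ)⁴ = id and (Φ∘Ψ)² ≠ id (equivalently, the group of the model is the dihedral group D8) if and only if the multiplicities satisfy one of the following two systems, or one of these systems after the diagonal reflection a_{u,v} ↦ a_{v,u}: (4a) a_{1,1}=a_{0,1}=a_{0,-1}=a_{-1,-1}=0 and a_{1,-1}a_{-1,1}=a_{1,0}a_{-1,0}; (4b) a_{1,-1}=a_{0,1}=a_{0,-1}=a_{-1,1}=0 and a_{1,1}a_{-1,-1}=a_{1,0}a_{-1,0}. -/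

import Mathlib

/- STATEMENT 16: Characterization of the interesting models whose group is D8:
(Φ∘Ψ)⁴ = id and (Φ∘Ψ)² ≠ id iff the multiplicities satisfy system 4a or 4b,
or one of these systems after the diagonal reflection a_{u,v} ↦ a_{v,u}. -/

noncomputable section

/-- The field ℂ(x,y) of rational functions in two variables over ℂ. -/
abbrev RF : Type := FractionRing (MvPolynomial (Fin 2) ℂ)

/-- The element x of ℂ(x,y). -/
def Xr : RF := algebraMap (MvPolynomial (Fin 2) ℂ) RF (MvPolynomial.X 0)

/-- The element y of ℂ(x,y). -/
def Yr : RF := algebraMap (MvPolynomial (Fin 2) ℂ) RF (MvPolynomial.X 1)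

/-- The constant c in ℂ(x,y). -/
def Cr (c : ℂ) : RF := algebraMap ℂ RF c

/-- A model is interesting if none of the four boundary triples of multiplicities
is the zero triple. -/
def Interesting (a : ℤ → ℤ → ℂ) : Prop :=
  ¬(a 1 (-1) = 0 ∧ a 1 0 = 0 ∧ a 1 1 = 0) ∧
  ¬(a (-1) 1 = 0 ∧ a 0 1 = 0 ∧ a 1 1 = 0) ∧
  ¬(a (-1) (-1) = 0 ∧ a (-1) 0 = 0 ∧ a (-1) 1 = 0) ∧
  ¬(a (-1) (-1) = 0 ∧ a 0 (-1) = 0 ∧ a 1 (-1) = 0)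

/-- Family 4a. -/
def Fam4a (b : ℤ → ℤ → ℂ) : Prop :=
  b 1 1 = 0 ∧ b 0 1 = 0 ∧ b 0 (-1) = 0 ∧ b (-1) (-1) = 0 ∧
  b 1 (-1) * b (-1) 1 = b 1 0 * b (-1) 0

/-- Family 4b. -/
def Fam4b (b : ℤ → ℤ → ℂ) : Prop :=
  b 1 (-1) = 0 ∧ b 0 1 = 0 ∧ b 0 (-1) = 0 ∧ b (-1) 1 = 0 ∧
  b 1 1 * b (-1) (-1) = b 1 0 * b (-1) 0

/-- A biquadratic polynomial in two variables; `cij` is the coefficient of `x ^ i * y ^ j`. -/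
structure Biquadratic (F : Type*) where
  (c00 c10 c20 c01 c11 c21 c02 c12 c22 : F)

namespace Biquadratic

section Ring

variable {F : Type*} [CommRing F] (m : Biquadratic F)

/-- The value of a biquadratic polynomial at a point. -/
def eval (x y : F) : F :=
  (m.c00 + m.c10 * x + m.c20 * x ^ 2) + (m.c01 + m.c11 * x + m.c21 * x ^ 2) * y +
    (m.c02 + m.c12 * x + m.c22 * x ^ 2) * y ^ 2

/-- The biquadratic polynomial with the two variables exchanged. -/
def swap : Biquadratic F :=
  ⟨m.c00, m.c01, m.c02, m.c10, m.c11, m.c12, m.c20, m.c21, m.c22⟩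

/-- The determinant of the coefficient matrix. -/
def det : F :=
  m.c00 * (m.c11 * m.c22 - m.c21 * m.c12) - m.c10 * (m.c01 * m.c22 - m.c21 * m.c02) +
    m.c20 * (m.c01 * m.c12 - m.c11 * m.c02)

/-- The quadratic invariant of a biquadratic polynomial under Möbius changes of both variables. -/
def quadInv : F :=
  m.c11 ^ 2 - 4 * m.c10 * m.c12 - 4 * m.c01 * m.c21 + 8 * (m.c00 * m.c22 + m.c02 * m.c20)

/-- The quartic invariant of a biquadratic polynomial, which is quadratic in the `2 × 2` minors. -/
def quartInv : F :=
  2 * (m.c00 * m.c22 - m.c02 * m.c20) ^ 2 -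
    2 * ((m.c10 * m.c22 - m.c20 * m.c12) * (m.c00 * m.c12 - m.c10 * m.c02) +
      (m.c00 * m.c21 - m.c20 * m.c01) * (m.c01 * m.c22 - m.c21 * m.c02)) +
    (m.c11 * m.c22 - m.c21 * m.c12) * (m.c00 * m.c11 - m.c10 * m.c01) +
    (m.c10 * m.c21 - m.c20 * m.c11) * (m.c01 * m.c12 - m.c11 * m.c02)

/-- The invariant whose vanishing expresses that the orbits of the two involutions attached to the
curve `m.eval x y = 0` close up after eight points (Cayley's criterion for quadrilaterals). -/
def cayley : F :=
  m.quartInv ^ 3 - m.quadInv * m.quartInv * m.det ^ 2 + 4 * m.det ^ 4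

/-- The biquadratic polynomial in the coordinate `X = (x - q) / (x - p)`. -/
def mobius (p q : F) : Biquadratic F where
  c00 := m.c00 + m.c10 * q + m.c20 * q ^ 2
  c10 := -(2 * m.c00 + m.c10 * (p + q) + 2 * m.c20 * (p * q))
  c20 := m.c00 + m.c10 * p + m.c20 * p ^ 2
  c01 := m.c01 + m.c11 * q + m.c21 * q ^ 2
  c11 := -(2 * m.c01 + m.c11 * (p + q) + 2 * m.c21 * (p * q))
  c21 := m.c01 + m.c11 * p + m.c21 * p ^ 2
  c02 := m.c02 + m.c12 * q + m.c22 * q ^ 2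
  c12 := -(2 * m.c02 + m.c12 * (p + q) + 2 * m.c22 * (p * q))
  c22 := m.c02 + m.c12 * p + m.c22 * p ^ 2

theorem eval_swap (x y : F) : m.swap.eval x y = m.eval y x := by
  simp only [eval, swap]; ring

theorem det_mobius (p q : F) : (m.mobius p q).det = (q - p) ^ 3 * m.det := by
  simp only [det, mobius]; ring

theorem quadInv_mobius (p q : F) : (m.mobius p q).quadInv = (q - p) ^ 2 * m.quadInv := by
  simp only [quadInv, mobius]; ring

theorem quartInv_mobius (p q : F) : (m.mobius p q).quartInv = (q - p) ^ 4 * m.quartInv := by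
  simp only [quartInv, mobius]; ring

theorem cayley_mobius (p q : F) : (m.mobius p q).cayley = (q - p) ^ 12 * m.cayley := by
  simp only [cayley, det_mobius, quadInv_mobius, quartInv_mobius]; ring

theorem det_swap : m.swap.det = m.det := by
  simp only [det, swap]; ring

theorem cayley_swap : m.swap.cayley = m.cayley := by
  have h₂ : m.swap.quadInv = m.quadInv := by simp only [quadInv, swap]; ring
  have h₃ : m.swap.quartInv = m.quartInv := by simp only [quartInv, swap]; ring
  simp only [cayley, det_swap, h₂, h₃]

/-- The homogenized form of evaluation after a Möbius change of the first variable. -/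
theorem eval_mobius (p q x y : F) :
    (m.mobius p q).c00 * (x - p) ^ 2 + (m.mobius p q).c10 * ((x - q) * (x - p)) +
        (m.mobius p q).c20 * (x - q) ^ 2 +
      ((m.mobius p q).c01 * (x - p) ^ 2 + (m.mobius p q).c11 * ((x - q) * (x - p)) +
        (m.mobius p q).c21 * (x - q) ^ 2) * y +
      ((m.mobius p q).c02 * (x - p) ^ 2 + (m.mobius p q).c12 * ((x - q) * (x - p)) +
        (m.mobius p q).c22 * (x - q) ^ 2) * y ^ 2 = (p - q) ^ 2 * m.eval x y := by
  simp only [mobius, eval]; ring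

end Ring

section Field

variable {F : Type*} [Field F] (m : Biquadratic F)

theorem eval_mobius_div {p q x : F} (hx : x ≠ p) (y : F) :
    (m.mobius p q).eval ((x - q) / (x - p)) y = ((p - q) / (x - p)) ^ 2 * m.eval x y := by
  have h : x - p ≠ 0 := sub_ne_zero.2 hx
  have := m.eval_mobius p q x y
  rw [div_pow, div_mul_eq_mul_div, ← this]
  simp only [eval]
  field_simp

/-- Cayley's criterion for an orbit through the points `(∞, ∞)` and `(0, 0)`. -/
theorem cayley_eq_zero_of_normalized {x₁ y₁ x₃ y₃ : F} (h00 : m.c00 = 0) (h22 : m.c22 = 0)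
    (hy₁ : y₁ ≠ 0) (hx₃ : x₃ ≠ 0) (h20 : m.c20 ≠ 0)
    (h02 : m.c02 ≠ 0) (hdet : m.det ≠ 0) (e₁ : m.c20 + m.c21 * y₁ = 0)
    (e₂ : m.c10 + m.c20 * x₁ = 0) (e₃ : m.c01 + m.c02 * y₃ = 0) (e₄ : m.c02 + m.c12 * x₃ = 0)
    (e₅ : m.eval x₁ y₁ = 0) (e₆ : m.eval x₃ y₃ = 0) : m.cayley = 0 := by
  obtain ⟨c00, c10, c20, c01, c11, c21, c02, c12, c22⟩ := m
  simp only [cayley, det, quadInv, quartInv, eval] at *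
  subst h00 h22
  -- the two roots `z`, `z'` of a common quadratic agree since their sum is not `c11`
  obtain ⟨z, hz⟩ : ∃ z, c21 * c10 = z * c20 := ⟨_, (div_mul_cancel₀ _ h20).symm⟩
  obtain ⟨z', hz'⟩ : ∃ z, c12 * c01 = z * c02 := ⟨_, (div_mul_cancel₀ _ h02).symm⟩
  have hx : c21 * x₁ = -z := mul_left_cancel₀ h20 (by linear_combination c21 * e₂ - hz)
  have hy : c12 * y₃ = -z' := mul_left_cancel₀ h02 (by linear_combination c12 * e₃ - hz')
  have hq : z ^ 2 - c11 * z + (c21 * c01 + c10 * c12 - c20 * c02) = 0 := by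
    have h : c01 + c11 * x₁ + c21 * x₁ ^ 2 + (c02 + c12 * x₁) * y₁ = 0 :=
      mul_left_cancel₀ hy₁ (by linear_combination e₅ - x₁ * e₂)
    linear_combination c21 * h - (c02 + c12 * x₁) * e₁ + c12 * e₂ - (c11 + c21 * x₁ - z) * hx
  have hq' : z' ^ 2 - c11 * z' + (c21 * c01 + c10 * c12 - c20 * c02) = 0 := by
    have h : c10 + c20 * x₃ + (c11 + c21 * x₃) * y₃ + c12 * y₃ ^ 2 = 0 :=
      mul_left_cancel₀ hx₃ (by linear_combination e₆ - y₃ * e₃)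
    linear_combination c12 * h - (c20 + c21 * y₃) * e₄ + c21 * e₃ - (c11 + c12 * y₃ - z') * hy
  have hd : c20 * c02 * (z + z' - c11) ≠ 0 := by
    intro h; apply hdet; linear_combination h + c02 * hz + c20 * hz'
  have hzz : z = z' := by
    have : (z - z') * (z + z' - c11) = 0 := by linear_combination hq - hq'
    rcases mul_eq_zero.1 this with h | h
    · exact sub_eq_zero.1 h
    · simp [h] at hd
  subst hzz
  have hdet' : c02 * (c21 * c10) + c20 * (c12 * c01) - c20 * c02 * c11 =
      c20 * c02 * (2 * z - c11) := by
    rw [hz, hz']; ring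
  have hquad : c11 ^ 2 - 4 * (c21 * c01 + c10 * c12) + 8 * (c20 * c02) =
      (2 * z - c11) ^ 2 + 4 * (c20 * c02) := by
    linear_combination -4 * hq
  have hquart : 2 * (c20 * c02) ^ 2 - 2 * (c20 * c02) * (c21 * c01 + c10 * c12) +
      c21 * c10 * (c12 * c01) + (c21 * c10 - c20 * c11) * (c12 * c01 - c11 * c02) =
      c20 * c02 * (2 * z - c11) ^ 2 := by
    rw [hz, hz']
    linear_combination -2 * (c20 * c02) * hq
  calc _ = (2 * (c20 * c02) ^ 2 - 2 * (c20 * c02) * (c21 * c01 + c10 * c12) +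
          c21 * c10 * (c12 * c01) + (c21 * c10 - c20 * c11) * (c12 * c01 - c11 * c02)) ^ 3 -
        (c11 ^ 2 - 4 * (c21 * c01 + c10 * c12) + 8 * (c20 * c02)) *
          (2 * (c20 * c02) ^ 2 - 2 * (c20 * c02) * (c21 * c01 + c10 * c12) +
            c21 * c10 * (c12 * c01) + (c21 * c10 - c20 * c11) * (c12 * c01 - c11 * c02)) *
          (c02 * (c21 * c10) + c20 * (c12 * c01) - c20 * c02 * c11) ^ 2 +
        4 * (c02 * (c21 * c10) + c20 * (c12 * c01) - c20 * c02 * c11) ^ 4 := by ring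
    _ = 0 := by rw [hdet', hquad, hquart]; ring

/-- The coefficients of a quadratic polynomial with two known distinct roots. -/
theorem vieta {a b c r s : F} (hrs : r ≠ s) (hr : c + b * r + a * r ^ 2 = 0)
    (hs : c + b * s + a * s ^ 2 = 0) : b = -a * (r + s) ∧ c = a * (r * s) := by
  have hb : b = -a * (r + s) := by
    have : (r - s) * (b + a * (r + s)) = 0 := by linear_combination hr - hs
    rcases mul_eq_zero.1 this with h | h
    · exact absurd (sub_eq_zero.1 h) hrs
    · linear_combination h
  exact ⟨hb, by linear_combination hr - r * hb⟩

theorem eval_swap_mobius_div {p q y : F} (hy : y ≠ p) (x : F) :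
    (m.swap.mobius p q).swap.eval x ((y - q) / (y - p)) = ((p - q) / (y - p)) ^ 2 * m.eval x y := by
  rw [eval_swap, eval_mobius_div _ hy, eval_swap]

/-- Three points `x₀, x₁, x₃` over which the curve has root pairs `{y₀, y₁}`, `{y₁, y₂}`,
`{y₃, y₀}` force the coefficient matrix to be invertible. -/
theorem det_ne_zero {x₀ x₁ x₃ y₀ y₁ y₂ y₃ : F}
    (h₀ : m.c02 + m.c12 * x₀ + m.c22 * x₀ ^ 2 ≠ 0) (h₁ : m.c02 + m.c12 * x₁ + m.c22 * x₁ ^ 2 ≠ 0)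
    (h₃ : m.c02 + m.c12 * x₃ + m.c22 * x₃ ^ 2 ≠ 0)
    (y01 : y₀ ≠ y₁) (y12 : y₁ ≠ y₂) (y03 : y₀ ≠ y₃) (y02 : y₀ ≠ y₂) (y13 : y₁ ≠ y₃)
    (e00 : m.eval x₀ y₀ = 0) (e01 : m.eval x₀ y₁ = 0) (e11 : m.eval x₁ y₁ = 0)
    (e12 : m.eval x₁ y₂ = 0) (e33 : m.eval x₃ y₃ = 0) (e30 : m.eval x₃ y₀ = 0) : m.det ≠ 0 := by
  intro hdet
  obtain ⟨b₀, c₀⟩ := vieta y01 e00 e01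
  obtain ⟨b₁, c₁⟩ := vieta y12 e11 e12
  obtain ⟨b₃, c₃⟩ := vieta y03 e30 e33
  have key (p₀ p₁ p₃ q₀ q₁ q₃ r₀ r₁ r₃ : F)
      (hp₀ : m.c00 + m.c10 * x₀ + m.c20 * x₀ ^ 2 = p₀)
      (hp₁ : m.c00 + m.c10 * x₁ + m.c20 * x₁ ^ 2 = p₁)
      (hp₃ : m.c00 + m.c10 * x₃ + m.c20 * x₃ ^ 2 = p₃)
      (hq₀ : m.c01 + m.c11 * x₀ + m.c21 * x₀ ^ 2 = q₀)
      (hq₁ : m.c01 + m.c11 * x₁ + m.c21 * x₁ ^ 2 = q₁)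
      (hq₃ : m.c01 + m.c11 * x₃ + m.c21 * x₃ ^ 2 = q₃)
      (hr₀ : m.c02 + m.c12 * x₀ + m.c22 * x₀ ^ 2 = r₀)
      (hr₁ : m.c02 + m.c12 * x₁ + m.c22 * x₁ ^ 2 = r₁)
      (hr₃ : m.c02 + m.c12 * x₃ + m.c22 * x₃ ^ 2 = r₃) :
      p₀ * (q₁ * r₃ - q₃ * r₁) - p₁ * (q₀ * r₃ - q₃ * r₀) + p₃ * (q₀ * r₁ - q₁ * r₀) =
        m.det * ((x₁ - x₀) * (x₃ - x₀) * (x₃ - x₁)) := by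
    subst hp₀ hp₁ hp₃ hq₀ hq₁ hq₃ hr₀ hr₁ hr₃
    simp only [det]; ring
  have h := key _ _ _ _ _ _ _ _ _ c₀ c₁ c₃ b₀ b₁ b₃ rfl rfl rfl
  generalize m.c02 + m.c12 * x₀ + m.c22 * x₀ ^ 2 = r₀ at *
  generalize m.c02 + m.c12 * x₁ + m.c22 * x₁ ^ 2 = r₁ at *
  generalize m.c02 + m.c12 * x₃ + m.c22 * x₃ ^ 2 = r₃ at *
  have : r₀ * r₁ * r₃ * ((y₀ - y₁) * (y₀ - y₂) * (y₁ - y₃)) = 0 := by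
    rw [hdet] at h
    linear_combination h
  simp [h₀, h₁, h₃, sub_eq_zero, y01, y02, y13] at this

/-- Cayley's criterion: if the points `(xᵢ, yᵢ)` and `(xᵢ, yᵢ₊₁)` for `i` modulo four all lie on the
curve `m.eval x y = 0`, then the Cayley invariant vanishes. -/
theorem cayley_eq_zero {x₀ x₁ x₂ x₃ y₀ y₁ y₂ y₃ : F}
    (h₀ : m.c02 + m.c12 * x₀ + m.c22 * x₀ ^ 2 ≠ 0) (h₁ : m.c02 + m.c12 * x₁ + m.c22 * x₁ ^ 2 ≠ 0)
    (h₂ : m.c02 + m.c12 * x₂ + m.c22 * x₂ ^ 2 ≠ 0) (h₃ : m.c02 + m.c12 * x₃ + m.c22 * x₃ ^ 2 ≠ 0)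
    (x01 : x₀ ≠ x₁) (x12 : x₁ ≠ x₂) (x23 : x₂ ≠ x₃) (x03 : x₀ ≠ x₃) (x02 : x₀ ≠ x₂)
    (y01 : y₀ ≠ y₁) (y12 : y₁ ≠ y₂) (y23 : y₂ ≠ y₃) (y03 : y₀ ≠ y₃) (y02 : y₀ ≠ y₂)
    (y13 : y₁ ≠ y₃)
    (e00 : m.eval x₀ y₀ = 0) (e01 : m.eval x₀ y₁ = 0) (e11 : m.eval x₁ y₁ = 0)
    (e12 : m.eval x₁ y₂ = 0) (e22 : m.eval x₂ y₂ = 0) (e23 : m.eval x₂ y₃ = 0)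
    (e33 : m.eval x₃ y₃ = 0) (e30 : m.eval x₃ y₀ = 0) : m.cayley = 0 := by
  have hdet := m.det_ne_zero h₀ h₁ h₃ y01 y12 y03 y02 y13 e00 e01 e11 e12 e33 e30
  have ne_zero {x y r s : F} (hx : m.c02 + m.c12 * x + m.c22 * x ^ 2 ≠ 0) (hrs : r ≠ s)
      (hr : m.eval x r = 0) (hs : m.eval x s = 0) (hyr : y ≠ r) (hys : y ≠ s) :
      m.eval x y ≠ 0 := by
    obtain ⟨hb, hc⟩ := vieta hrs hr hs
    have : m.eval x y = (m.c02 + m.c12 * x + m.c22 * x ^ 2) * ((y - r) * (y - s)) := by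
      rw [eval, hb, hc]; ring
    rw [this]
    exact mul_ne_zero hx (mul_ne_zero (sub_ne_zero.2 hyr) (sub_ne_zero.2 hys))
  have hx : x₂ - x₀ ≠ 0 := sub_ne_zero.2 x02.symm
  have hy : y₂ - y₀ ≠ 0 := sub_ne_zero.2 y02.symm
  have divNe {p q r : F} (hp : r ≠ p) (hq : r ≠ q) : (r - q) / (r - p) ≠ 0 :=
    div_ne_zero (sub_ne_zero.2 hq) (sub_ne_zero.2 hp)
  set M := ((m.mobius x₀ x₂).swap.mobius y₀ y₂).swap with hM
  have hcayley : M.cayley = (y₂ - y₀) ^ 12 * ((x₂ - x₀) ^ 12 * m.cayley) := by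
    rw [hM, cayley_swap, cayley_mobius, cayley_swap, cayley_mobius]
  have hMdet : M.det ≠ 0 := by
    have : M.det = (y₂ - y₀) ^ 3 * ((x₂ - x₀) ^ 3 * m.det) := by
      simp only [hM, det_swap, det_mobius]
    rw [this]
    positivity
  have c22 : M.c22 = m.eval x₀ y₀ := by simp only [hM, mobius, swap, eval]
  have c00 : M.c00 = m.eval x₂ y₂ := by simp only [hM, mobius, swap, eval]
  have c20 : M.c20 = m.eval x₀ y₂ := by simp only [hM, mobius, swap, eval]
  have c02 : M.c02 = m.eval x₂ y₀ := by simp only [hM, mobius, swap, eval]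
  have solve {c d p q r s : F} (hp : r ≠ p) (hs : r ≠ s)
      (h : (r - s) * (c * (r - p) + d * (r - q)) = 0) : c + d * ((r - q) / (r - p)) = 0 := by
    have hp' : r - p ≠ 0 := sub_ne_zero.2 hp
    have h' := (mul_eq_zero.1 h).resolve_left (sub_ne_zero.2 hs)
    field_simp
    linear_combination h'
  have hMc : M.cayley = 0 := by
    refine M.cayley_eq_zero_of_normalized (x₁ := (x₁ - x₂) / (x₁ - x₀))
      (y₁ := (y₁ - y₂) / (y₁ - y₀)) (x₃ := (x₃ - x₂) / (x₃ - x₀)) (y₃ := (y₃ - y₂) / (y₃ - y₀))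
      (c00.trans e22) (c22.trans e00) (divNe y01.symm y12) (divNe x03.symm x23.symm)
      (c20.trans_ne <| ne_zero h₀ y01 e00 e01 y02.symm y12.symm)
      (c02.trans_ne <| ne_zero h₂ y23 e22 e23 y02 y03) hMdet
      (solve y01.symm y01.symm ?_) (solve x01.symm x12 ?_) (solve y03.symm y23.symm ?_)
      (solve x03.symm x03.symm ?_) ?_ ?_
    · have : (y₁ - y₀) * (M.c20 * (y₁ - y₀) + M.c21 * (y₁ - y₂)) + (y₁ - y₂) ^ 2 * M.c22 =
          (y₀ - y₂) ^ 2 * m.eval x₀ y₁ := by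
        simp only [hM, mobius, swap, eval]; ring
      rwa [e01, c22, e00, mul_zero, mul_zero, add_zero] at this
    · have : (x₁ - x₂) * (M.c10 * (x₁ - x₀) + M.c20 * (x₁ - x₂)) + (x₁ - x₀) ^ 2 * M.c00 =
          (x₀ - x₂) ^ 2 * m.eval x₁ y₂ := by
        simp only [hM, mobius, swap, eval]; ring
      rwa [e12, c00, e22, mul_zero, mul_zero, add_zero] at this
    · have : (y₃ - y₂) * (M.c01 * (y₃ - y₀) + M.c02 * (y₃ - y₂)) + (y₃ - y₀) ^ 2 * M.c00 =
          (y₀ - y₂) ^ 2 * m.eval x₂ y₃ := by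
        simp only [hM, mobius, swap, eval]; ring
      rwa [e23, c00, e22, mul_zero, mul_zero, add_zero] at this
    · have : (x₃ - x₀) * (M.c02 * (x₃ - x₀) + M.c12 * (x₃ - x₂)) + (x₃ - x₂) ^ 2 * M.c22 =
          (x₀ - x₂) ^ 2 * m.eval x₃ y₀ := by
        simp only [hM, mobius, swap, eval]; ring
      rwa [e30, c22, e00, mul_zero, mul_zero, add_zero] at this
    · rw [eval_swap_mobius_div _ y01.symm, eval_mobius_div _ x01.symm, e11, mul_zero, mul_zero]
    · rw [eval_swap_mobius_div _ y03.symm, eval_mobius_div _ x03.symm, e33, mul_zero, mul_zero]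
  rw [hcayley] at hMc
  simpa [hx, hy] using hMc

end Field

end Biquadratic

/-- A polynomial function of degree at most six that vanishes identically has zero coefficients. -/
theorem coeff_eq_zero_of_forall {c₀ c₁ c₂ c₃ c₄ c₅ c₆ : ℂ}
    (h : ∀ s : ℂ, c₀ + c₁ * s + c₂ * s ^ 2 + c₃ * s ^ 3 + c₄ * s ^ 4 + c₅ * s ^ 5 + c₆ * s ^ 6 = 0) :
    c₀ = 0 ∧ c₁ = 0 ∧ c₂ = 0 ∧ c₃ = 0 ∧ c₄ = 0 ∧ c₅ = 0 ∧ c₆ = 0 := by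
  have hp : (Polynomial.C c₀ + .C c₁ * .X + .C c₂ * .X ^ 2 + .C c₃ * .X ^ 3 + .C c₄ * .X ^ 4 +
      .C c₅ * .X ^ 5 + .C c₆ * .X ^ 6 : Polynomial ℂ) = 0 :=
    Polynomial.funext fun s => by simpa using h s
  have hc (n : ℕ) := congrArg (Polynomial.coeff · n) hp
  simp only [Polynomial.coeff_add, Polynomial.coeff_C_mul, Polynomial.coeff_X_pow,
    Polynomial.coeff_X, Polynomial.coeff_C, Polynomial.coeff_zero] at hc
  refine ⟨?_, ?_, ?_, ?_, ?_, ?_, ?_⟩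
  · simpa using hc 0
  · simpa using hc 1
  · simpa using hc 2
  · simpa using hc 3
  · simpa using hc 4
  · simpa using hc 5
  · simpa using hc 6

theorem cayley_pencil_coeffs {p q β γ k μ : ℂ}
    (h : ∀ s : ℂ, (γ + β * s + p * s ^ 2) ^ 3 -
      (s ^ 2 + k) * (γ + β * s + p * s ^ 2) * (μ - q * s) ^ 2 + 4 * (μ - q * s) ^ 4 = 0) :
    γ ^ 3 - k * γ * μ ^ 2 + 4 * μ ^ 4 = 0 ∧
    3 * γ ^ 2 * β - k * (β * μ ^ 2 - 2 * γ * μ * q) - 16 * μ ^ 3 * q = 0 ∧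
    3 * γ ^ 2 * p + 3 * γ * β ^ 2 - γ * μ ^ 2 -
      k * (p * μ ^ 2 - 2 * β * μ * q + γ * q ^ 2) + 24 * μ ^ 2 * q ^ 2 = 0 ∧
    6 * γ * β * p + β ^ 3 - (β * μ ^ 2 - 2 * γ * μ * q) -
      k * (β * q ^ 2 - 2 * p * μ * q) - 16 * μ * q ^ 3 = 0 ∧
    3 * γ * p ^ 2 + 3 * β ^ 2 * p - (p * μ ^ 2 - 2 * β * μ * q + γ * q ^ 2) -
      k * p * q ^ 2 + 4 * q ^ 4 = 0 ∧
    3 * β * p ^ 2 - (β * q ^ 2 - 2 * p * μ * q) = 0 ∧ p ^ 3 - p * q ^ 2 = 0 :=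
  coeff_eq_zero_of_forall fun s => by linear_combination h s

theorem cayley_pencil_of_eq {n β γ k μ : ℂ} (hn : n ≠ 0)
    (h : ∀ s : ℂ, (γ + β * s + n * s ^ 2) ^ 3 -
      (s ^ 2 + k) * (γ + β * s + n * s ^ 2) * (μ - n * s) ^ 2 + 4 * (μ - n * s) ^ 4 = 0) :
    β = 0 ∧ μ = 0 ∧ γ = 0 ∧ k = 4 * n := by
  obtain ⟨h₀, h₁, h₂, h₃, h₄, h₅, -⟩ := cayley_pencil_coeffs h
  obtain rfl : β = -μ := mul_left_cancel₀ (pow_ne_zero 2 hn) (by linear_combination h₅ / 2)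
  have hγ : γ = n * (k - 4 * n) / 2 :=
    mul_left_cancel₀ (pow_ne_zero 2 hn) (by linear_combination h₄ / 2)
  have hμ : μ = 0 := by
    by_contra hμ
    have hk : k = 8 * n := mul_left_cancel₀ (mul_ne_zero hμ (pow_ne_zero 2 hn)) (by
      rw [hγ] at h₃; linear_combination h₃)
    obtain rfl : γ = 2 * n ^ 2 := by rw [hγ, hk]; ring
    subst hk
    have hμn : μ ^ 2 = n ^ 3 :=
      mul_left_cancel₀ (pow_ne_zero 2 hn) (by linear_combination h₂ / 4)
    have : n ^ 4 * μ = 0 := by linear_combination h₁ / 12 + (2 / 3) * n * μ * hμn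
    simp [hn, hμ] at this
  subst hμ
  have hγ0 : γ = 0 := pow_eq_zero_iff three_ne_zero |>.1 (by linear_combination h₀)
  refine ⟨neg_zero, rfl, hγ0, ?_⟩
  rw [hγ0] at hγ
  exact mul_left_cancel₀ hn (by linear_combination -2 * hγ)

theorem cayley_pencil {n₁ n₂ β γ k μ : ℂ} (hδ : ¬(n₁ - n₂ = 0 ∧ μ = 0))
    (h : ∀ s : ℂ, (γ + β * s + (n₁ + n₂) * s ^ 2) ^ 3 -
      (s ^ 2 + k) * (γ + β * s + (n₁ + n₂) * s ^ 2) * (μ - (n₁ - n₂) * s) ^ 2 +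
        4 * (μ - (n₁ - n₂) * s) ^ 4 = 0) :
    (n₁ = 0 ∧ n₂ ≠ 0 ∨ n₁ ≠ 0 ∧ n₂ = 0) ∧ β = 0 ∧ μ = 0 ∧ γ = 0 ∧ k = 4 * (n₁ + n₂) := by
  obtain ⟨h₀, h₁, h₂, h₃, h₄, h₅, h₆⟩ := cayley_pencil_coeffs h
  have h₆' : (n₁ + n₂) * (n₁ * n₂) = 0 := by linear_combination h₆ / 4
  by_cases hn₁ : n₁ = 0
  · subst hn₁
    by_cases hn₂ : n₂ = 0
    · subst hn₂
      have hμ : μ ≠ 0 := fun h => hδ ⟨sub_zero 0, h⟩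
      exfalso
      have hγ : γ = 0 := by
        by_contra hγ
        have e : 3 * β ^ 2 = μ ^ 2 := mul_left_cancel₀ hγ (by linear_combination h₂)
        have hβ : β * μ ^ 2 = 0 := by linear_combination (-3 / 2) * h₃ + β * e / 2
        have hβ : β = 0 := by simpa [hμ] using hβ
        exact hμ (pow_eq_zero_iff two_ne_zero |>.1 (by rw [← e, hβ]; ring))
      simp [hγ, hμ] at h₀
    · have h' := cayley_pencil_of_eq (n := n₂) (μ := -μ) (β := β) (γ := γ) (k := k) hn₂
        fun s => by linear_combination h s
      simpa [hn₂] using h'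
  · by_cases hn₂ : n₂ = 0
    · subst hn₂
      have h' := cayley_pencil_of_eq (n := n₁) (μ := μ) (β := β) (γ := γ) (k := k) hn₁
        fun s => by linear_combination h s
      simpa [hn₁] using h'
    · exfalso
      obtain rfl : n₁ = -n₂ := by
        rcases mul_eq_zero.1 h₆' with h | h
        · linear_combination h
        · simp [hn₁, hn₂] at h
      have hβ : β = 0 := by
        have : n₂ ^ 2 * β = 0 := by linear_combination -h₅ / 4
        simpa [hn₂] using this
      subst hβ
      have hγ : γ = 16 * n₂ ^ 2 :=
        mul_left_cancel₀ (pow_ne_zero 2 hn₂) (by linear_combination -h₄ / 4)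
      subst hγ
      have hμ : μ = 0 := by
        have : n₂ ^ 3 * μ = 0 := by linear_combination h₃ / 64
        simpa [hn₂] using this
      subst hμ
      simp [hn₂] at h₀

theorem systems_of_vanishing {A L B W U C R D : ℂ} (hBC : B * C = 0) (hAD : A * D ≠ 0)
    (h₁ : W * U + L * R = A * D) (h₂ : D * W * L + A * R * U = 0) (h₃ : B * W * R + C * L * U = 0)
    (h₄ : B * (W ^ 2 * D + A * R ^ 2) + C * (A * U ^ 2 + D * L ^ 2) + L * R * U * W = 0) :
    (B = 0 ∧ C = 0) ∧ (U = 0 ∧ W = 0 ∨ L = 0 ∧ R = 0) := by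
  obtain ⟨hA, hD⟩ := mul_ne_zero_iff.1 hAD
  rcases mul_eq_zero.1 hBC with rfl | rfl
  · by_cases hC : C = 0
    · subst hC
      grind
    · grind
  · grind

theorem algHom_ext_RF {f g : RF →ₐ[ℂ] RF} (hx : f Xr = g Xr) (hy : f Yr = g Yr) : f = g := by
  refine IsLocalization.algHom_ext (nonZeroDivisors (MvPolynomial (Fin 2) ℂ)) ?_
  refine MvPolynomial.algHom_ext fun i => ?_
  fin_cases i
  · exact hx
  · exact hy

theorem aeval_Xr_Yr (p : MvPolynomial (Fin 2) ℂ) :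
    MvPolynomial.aeval ![Xr, Yr] p = algebraMap (MvPolynomial (Fin 2) ℂ) RF p := by
  have : MvPolynomial.aeval ![Xr, Yr] = IsScalarTower.toAlgHom ℂ (MvPolynomial (Fin 2) ℂ) RF := by
    refine MvPolynomial.algHom_ext fun i => ?_
    fin_cases i <;> simp [Xr, Yr]
  exact congrArg (· p) this

theorem coeff_eq_zero {c00 c10 c20 c01 c11 c21 c02 c12 c22 : ℂ}
    (h : Cr c00 + Cr c10 * Xr + Cr c20 * Xr ^ 2 + (Cr c01 + Cr c11 * Xr + Cr c21 * Xr ^ 2) * Yr +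
      (Cr c02 + Cr c12 * Xr + Cr c22 * Xr ^ 2) * Yr ^ 2 = 0) :
    (c00 = 0 ∧ c10 = 0 ∧ c20 = 0) ∧ (c01 = 0 ∧ c11 = 0 ∧ c21 = 0) ∧
      (c02 = 0 ∧ c12 = 0 ∧ c22 = 0) := by
  have hp (s t : ℂ) : c00 + c10 * s + c20 * s ^ 2 + (c01 + c11 * s + c21 * s ^ 2) * t +
      (c02 + c12 * s + c22 * s ^ 2) * t ^ 2 = 0 := by
    have hpoly : (.C c00 + .C c10 * .X 0 + .C c20 * .X 0 ^ 2 +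
        (.C c01 + .C c11 * .X 0 + .C c21 * .X 0 ^ 2) * .X 1 +
        (.C c02 + .C c12 * .X 0 + .C c22 * .X 0 ^ 2) * .X 1 ^ 2 : MvPolynomial (Fin 2) ℂ) = 0 := by
      apply IsFractionRing.injective (MvPolynomial (Fin 2) ℂ) RF
      rw [← aeval_Xr_Yr, map_zero]
      simpa [Cr] using h
    simpa using congrArg (MvPolynomial.eval ![s, t]) hpoly
  have hs {a b c : ℂ} (h : ∀ t : ℂ, a + b * t + c * t ^ 2 = 0) : a = 0 ∧ b = 0 ∧ c = 0 :=
    ⟨by linear_combination h 0, by linear_combination (h 1 - h (-1)) / 2,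
      by linear_combination (h 1 + h (-1)) / 2 - h 0⟩
  exact ⟨hs fun s => (hs (hp s)).1, hs fun s => (hs (hp s)).2.1, hs fun s => (hs (hp s)).2.2⟩

theorem exists_eq_Cr_of_isAlgebraic {z : RF} (hz : IsAlgebraic ℂ z) : ∃ c, Cr c = z :=
  minpoly.mem_range_of_degree_eq_one ℂ z
    (IsAlgClosed.degree_eq_one_of_irreducible ℂ (minpoly.irreducible hz.isIntegral))

/-- A quadratic polynomial with two distinct roots has no further root. -/
theorem eq_or_eq_of_quadratic {F : Type*} [Field F] {a b c r s z : F} (ha : a ≠ 0) (hrs : r ≠ s)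
    (hr : c + b * r + a * r ^ 2 = 0) (hs : c + b * s + a * s ^ 2 = 0)
    (hz : c + b * z + a * z ^ 2 = 0) : z = r ∨ z = s := by
  obtain ⟨hb, hc⟩ := Biquadratic.vieta hrs hr hs
  have : a * ((z - r) * (z - s)) = 0 := by
    rw [hb, hc] at hz
    linear_combination hz
  simpa [ha, sub_eq_zero] using this

theorem map_map_eq_self {F : Type*} [Field F] (f : F →+* F) {x d n : F} (hd : f d = d)
    (hn : f n = n) (h : f x * x * d = n) (hn0 : n ≠ 0) : f (f x) = x := by
  have h' : f (f x) * f x * d = n := by simpa [hd, hn] using congrArg f h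
  have : f x * d ≠ 0 := fun h0 => hn0 (by rw [← h]; linear_combination x * h0)
  exact mul_right_cancel₀ this (by linear_combination h' - h)

theorem map_eq_self_of_kernel {F : Type*} [Field F] (f : F →+* F) {x y t n v d : F} (hy : f y = y)
    (hn : f n = n) (hv : f v = v) (hd : f d = d) (hx : f x * x * d = n) (hn0 : n ≠ 0)
    (hy0 : y ≠ 0) (ht : t * (x * y) = n + x * v + x ^ 2 * d) : f t = t := by
  have ht' : f t * (f x * y) = n + f x * v + f x ^ 2 * d := by
    simpa [hy, hn, hv, hd] using congrArg f ht
  have h0 : f x * x * y ≠ 0 := by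
    refine mul_ne_zero (fun h => hn0 ?_) hy0
    rw [← hx, h, zero_mul]
  exact mul_right_cancel₀ h0 (by linear_combination x * ht' - f x * ht + (f x - x) * hx)

/-- The kernel polynomial of a model, with `t` the inverse of the length variable. -/
def kernel (A L B W U C R D : ℂ) (t : RF) : Biquadratic RF :=
  ⟨Cr A, Cr W, Cr C, Cr L, -t, Cr R, Cr B, Cr U, Cr D⟩

theorem map_eval_kernel (f : RF →ₐ[ℂ] RF) {A L B W U C R D : ℂ} {t x y : RF} (ht : f t = t)
    (h : (kernel A L B W U C R D t).eval x y = 0) :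
    (kernel A L B W U C R D t).eval (f x) (f y) = 0 := by
  simpa [Biquadratic.eval, kernel, Cr, ht] using congrArg f h

theorem kernel_of_order_four {A L B W U C R D : ℂ}
    (hE : Cr B + Cr U * Xr + Cr D * Xr ^ 2 ≠ 0) (hD : Cr C + Cr R * Yr + Cr D * Yr ^ 2 ≠ 0)
    {Φ Ψ : RF →ₐ[ℂ] RF} {t : RF} (hΦt : Φ t = t) (hΨt : Ψ t = t)
    (hker : (kernel A L B W U C R D t).eval Xr Yr = 0)
    (hΦy : Φ Yr = Yr) (hΨx : Ψ Xr = Xr) (hΦx : Xr ≠ Φ Xr) (hΨy : Yr ≠ Ψ Yr)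
    (hΦ : ∀ z, Φ (Φ z) = z) (hΨ : ∀ z, Ψ (Ψ z) = z)
    (h4 : ∀ z, Φ (Ψ (Φ (Ψ (Φ (Ψ (Φ (Ψ z))))))) = z)
    (h2 : (Φ.comp Ψ).comp (Φ.comp Ψ) ≠ AlgHom.id ℂ RF) :
    (kernel A L B W U C R D t).cayley = 0 ∧ (kernel A L B W U C R D t).det ≠ 0 := by
  have hG (z : RF) : Φ (Ψ (Φ (Ψ z))) = Ψ (Φ (Ψ (Φ z))) := by
    simpa [hΦ, hΨ] using h4 (Ψ (Φ (Ψ (Φ z))))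
  have iΦ := Φ.injective
  have iΨ := Ψ.injective
  have hE' (f : RF →ₐ[ℂ] RF) : Cr B + Cr U * f Xr + Cr D * f Xr ^ 2 ≠ 0 := by
    have := (map_ne_zero f).2 hE
    simpa [Cr] using this
  have x01 : Xr ≠ Ψ (Φ Xr) := by
    simpa [hΨx] using iΨ.ne hΦx
  have x12 : Ψ (Φ Xr) ≠ Φ (Ψ (Φ Xr)) := by
    have := hG Xr
    rw [hΨx] at this
    rw [this]
    exact iΨ.ne (iΦ.ne x01)
  have x23 : Φ (Ψ (Φ Xr)) ≠ Φ Xr := iΦ.ne x01.symm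
  have y03 : Yr ≠ Φ (Ψ Yr) := by
    simpa [hΦy] using iΦ.ne hΨy
  have y12 : Ψ Yr ≠ Ψ (Φ (Ψ Yr)) := iΨ.ne y03
  have hGy : Φ (Ψ (Φ (Ψ Yr))) = Ψ (Φ (Ψ Yr)) := by rw [hG, hΦy]
  have y23 : Ψ (Φ (Ψ Yr)) ≠ Φ (Ψ Yr) := by
    rw [← hGy]
    exact iΦ.ne (iΨ.ne y03.symm)
  set m := kernel A L B W U C R D t
  have e30 : m.eval (Φ Xr) Yr = 0 := by simpa [hΦy] using map_eval_kernel Φ hΦt hker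
  have e01 : m.eval Xr (Ψ Yr) = 0 := by simpa [hΨx] using map_eval_kernel Ψ hΨt hker
  have e33 := map_eval_kernel Φ hΦt e01
  have e11 := map_eval_kernel Ψ hΨt e30
  have e12 : m.eval (Ψ (Φ Xr)) (Ψ (Φ (Ψ Yr))) = 0 := map_eval_kernel Ψ hΨt e33
  have e23 : m.eval (Φ (Ψ (Φ Xr))) (Φ (Ψ Yr)) = 0 := map_eval_kernel Φ hΦt e11
  have e22 : m.eval (Φ (Ψ (Φ Xr))) (Ψ (Φ (Ψ Yr))) = 0 := by
    rw [← hGy]; exact map_eval_kernel Φ hΦt e12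
  have hne (hx : Φ (Ψ (Φ Xr)) = Xr) (hy : Ψ (Φ (Ψ Yr)) = Yr) : False :=
    h2 (algHom_ext_RF (by simp [hΨx, hx]) (by simp [hy, hΦy]))
  have y02 : Yr ≠ Ψ (Φ (Ψ Yr)) := by
    intro hy
    rw [← hy] at e22
    have := eq_or_eq_of_quadratic (z := Φ (Ψ (Φ Xr))) hD hΦx
      (c := Cr A + Cr L * Yr + Cr B * Yr ^ 2) (b := Cr W - t * Yr + Cr U * Yr ^ 2)
      (by rw [← hker]; simp only [m, kernel, Biquadratic.eval]; ring)
      (by rw [← e30]; simp only [m, kernel, Biquadratic.eval]; ring)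
      (by rw [← e22]; simp only [m, kernel, Biquadratic.eval]; ring)
    exact this.elim (hne · hy.symm) x23
  have x02 : Xr ≠ Φ (Ψ (Φ Xr)) := by
    intro hx
    rw [← hx] at e22
    exact (eq_or_eq_of_quadratic hE hΨy hker e01 e22).elim (hne hx.symm) y12.symm
  have y13 : Ψ Yr ≠ Φ (Ψ Yr) := by
    intro h
    apply y02
    rw [← hGy, ← h, hΨ, hΦy]
  exact ⟨m.cayley_eq_zero hE (hE' (Ψ.comp Φ)) (hE' (Φ.comp (Ψ.comp Φ))) (hE' Φ) x01 x12 x23 hΦx x02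
    hΨy y12 y23 y03 y02 y13 hker e01 e11 e12 e22 e23 e33 e30,
    m.det_ne_zero hE (hE' (Ψ.comp Φ)) (hE' Φ) hΨy y12 y03 y02 y13 hker e01 e11 e12 e33 e30⟩

open Polynomial in
theorem systems_of_cayley_eq_zero {A L B W U C R D : ℂ} {t : RF} (ht : Transcendental ℂ t)
    (hdet : (kernel A L B W U C R D t).det ≠ 0) (h : (kernel A L B W U C R D t).cayley = 0) :
    (D = 0 ∧ U = 0 ∧ W = 0 ∧ A = 0 ∧ C * B = R * L) ∨
    (C = 0 ∧ U = 0 ∧ W = 0 ∧ B = 0 ∧ D * A = R * L) ∨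
    (D = 0 ∧ R = 0 ∧ L = 0 ∧ A = 0 ∧ B * C = U * W) ∨
    (B = 0 ∧ R = 0 ∧ L = 0 ∧ C = 0 ∧ D * A = U * W) := by
  let β := D * W * L + A * R * U + B * W * R + C * L * U
  let μ := -(A * R * U) - W * L * D + W * R * B + C * L * U
  let k := -(4 * W * U) - 4 * L * R + 8 * (A * D + B * C)
  let γ := 2 * (A * D - B * C) ^ 2 - 2 * ((W * D - C * U) * (A * U - W * B) +
    (A * R - C * L) * (L * D - R * B)) + 2 * (L * R * U * W)
  have hquart : (kernel A L B W U C R D t).quartInv =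
      Cr γ + Cr β * t + Cr (A * D + B * C) * t ^ 2 := by
    simp only [β, γ, kernel, Biquadratic.quartInv, Cr, map_add, map_sub, map_mul, map_pow,
      map_ofNat]
    ring
  have hquad : (kernel A L B W U C R D t).quadInv = t ^ 2 + Cr k := by
    simp only [k, kernel, Biquadratic.quadInv, Cr, map_add, map_sub, map_mul, map_neg, map_ofNat]
    ring
  have hdet' : (kernel A L B W U C R D t).det = Cr μ - Cr (A * D - B * C) * t := by
    simp only [μ, kernel, Biquadratic.det, Cr, map_add, map_sub, map_mul, map_neg]
    ring
  have hδ : ¬(A * D - B * C = 0 ∧ μ = 0) := by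
    rintro ⟨h₁, h₂⟩
    exact hdet (by simp [hdet', h₁, h₂, Cr])
  rw [Biquadratic.cayley, hquart, hquad, hdet'] at h
  have hp : ((.C γ + .C β * .X + .C (A * D + B * C) * .X ^ 2) ^ 3 -
      (.X ^ 2 + .C k) * (.C γ + .C β * .X + .C (A * D + B * C) * .X ^ 2) *
        (.C μ - .C (A * D - B * C) * .X) ^ 2 +
      4 * (.C μ - .C (A * D - B * C) * .X) ^ 4 : ℂ[X]) = 0 := by
    refine (transcendental_iff.1 ht) _ (Eq.trans ?_ h)
    simp only [Cr, map_add, map_sub, map_mul, map_pow, aeval_C, aeval_X, map_ofNat]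
  obtain ⟨hn, hβ, hμ, hγ, hk⟩ := cayley_pencil hδ fun s => by
    simpa using congrArg (Polynomial.eval s) hp
  simp only [β, μ, k, γ] at hβ hμ hγ hk
  have h₂ : D * W * L + A * R * U = 0 := by linear_combination (hβ - hμ) / 2
  have h₃ : B * W * R + C * L * U = 0 := by linear_combination (hβ + hμ) / 2
  have h₁ : W * U + L * R = A * D + B * C := by linear_combination -hk / 4
  rcases hn with ⟨hAD, hBC⟩ | ⟨hAD, hBC⟩
  · obtain ⟨⟨rfl, rfl⟩, ⟨rfl, rfl⟩ | ⟨rfl, rfl⟩⟩ := systems_of_vanishing (A := B) (B := A) (C := D)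
      (D := C) (W := U) (U := W) (L := L) (R := R) hAD hBC (by linear_combination h₁ + hAD)
      (by linear_combination h₃) (by linear_combination h₂)
      (by linear_combination hγ / 2 + (B * C) * h₁ + (L * R + U * W - A * D + 3 * (B * C)) * hAD)
    · left; simp; linear_combination -h₁
    · right; right; left; simp; linear_combination -h₁
  · obtain ⟨⟨rfl, rfl⟩, ⟨rfl, rfl⟩ | ⟨rfl, rfl⟩⟩ := systems_of_vanishing (A := A) (B := B) (C := C)
      (D := D) (W := W) (U := U) (L := L) (R := R) hBC hAD (by linear_combination h₁ + hBC)
      (by linear_combination h₂) (by linear_combination h₃)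
      (by linear_combination hγ / 2 + (A * D) * h₁ + (L * R + U * W - B * C + 3 * (A * D)) * hBC)
    · right; left; simp; linear_combination -h₁
    · right; right; right; simp; linear_combination -h₁

/-- The parameter for which the generic point lies on the kernel curve is transcendental. -/
theorem transcendental_of_eval_kernel {A L B W U C R D : ℂ} {t : RF}
    (hD : ¬(C = 0 ∧ R = 0 ∧ D = 0)) (h : (kernel A L B W U C R D t).eval Xr Yr = 0) :
    Transcendental ℂ t := by
  intro ht
  obtain ⟨c, rfl⟩ := exists_eq_Cr_of_isAlgebraic ht
  have := coeff_eq_zero (c11 := -c) (by simpa [kernel, Biquadratic.eval, Cr] using h)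
  exact hD ⟨this.1.2.2, this.2.1.2.2, this.2.2.2.2⟩

theorem Xr_ne_zero : Xr ≠ 0 := by
  intro h
  simpa using coeff_eq_zero (c00 := 0) (c10 := 1) (c20 := 0) (c01 := 0) (c11 := 0) (c21 := 0)
    (c02 := 0) (c12 := 0) (c22 := 0) (by simp [Cr, h])

theorem Yr_ne_zero : Yr ≠ 0 := by
  intro h
  simpa using coeff_eq_zero (c00 := 0) (c10 := 0) (c20 := 0) (c01 := 1) (c11 := 0) (c21 := 0)
    (c02 := 0) (c12 := 0) (c22 := 0) (by simp [Cr, h])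

theorem Cr_ne_zero {c : ℂ} (hc : c ≠ 0) : Cr c ≠ 0 := by
  simpa [Cr] using hc

theorem quadratic_Xr_ne_zero {a b c : ℂ} (h : ¬(a = 0 ∧ b = 0 ∧ c = 0)) :
    Cr a + Cr b * Xr + Cr c * Xr ^ 2 ≠ 0 := fun h0 => h <| by
  simpa using coeff_eq_zero (c00 := a) (c10 := b) (c20 := c) (c01 := 0) (c11 := 0) (c21 := 0)
    (c02 := 0) (c12 := 0) (c22 := 0) (by simpa [Cr] using h0)

theorem quadratic_Yr_ne_zero {a b c : ℂ} (h : ¬(a = 0 ∧ b = 0 ∧ c = 0)) :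
    Cr a + Cr b * Yr + Cr c * Yr ^ 2 ≠ 0 := fun h0 => h <| by
  simpa using coeff_eq_zero (c00 := a) (c10 := 0) (c20 := 0) (c01 := b) (c11 := 0) (c21 := 0)
    (c02 := c) (c12 := 0) (c22 := 0) (by simpa [Cr] using h0)

theorem order_four_of_sq_eq_div (f : RF →ₐ[ℂ] RF) {c c' : ℂ} (hc : c ≠ 0) (hc' : c' ≠ 0)
    (hx : f (f Xr) = Cr c / Xr) (hy : f (f Yr) = Cr c' / Yr) :
    f.comp (f.comp (f.comp f)) = AlgHom.id ℂ RF ∧ f.comp f ≠ AlgHom.id ℂ RF := by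
  have hC (b : ℂ) : f (Cr b) = Cr b := f.commutes b
  refine ⟨algHom_ext_RF ?_ ?_, fun h => ?_⟩
  · have := Cr_ne_zero hc
    simp [hx, map_div₀, hC, this]
  · have := Cr_ne_zero hc'
    simp [hy, map_div₀, hC, this]
  · have h' := congrArg (· Xr) h
    simp only [AlgHom.comp_apply, AlgHom.id_apply, hx] at h'
    rw [div_eq_iff Xr_ne_zero] at h'
    have := coeff_eq_zero (c00 := -c) (c10 := 0) (c20 := 1) (c01 := 0) (c11 := 0) (c21 := 0)
      (c02 := 0) (c12 := 0) (c22 := 0) (by simp only [Cr] at h' ⊢; simp [h']; ring)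
    simp at this

/-- Monomial involutions whose composition has order four. -/
theorem order_four_of_monomial {Φ Ψ : RF →ₐ[ℂ] RF} {α β : ℂ} {i j : ℤ} (hα : α ≠ 0) (hβ : β ≠ 0)
    (hij : i * j = 2) (hΦx : Φ Xr = Cr α * Yr ^ i / Xr) (hΦy : Φ Yr = Yr) (hΨx : Ψ Xr = Xr)
    (hΨy : Ψ Yr = Cr β * Xr ^ j / Yr) :
    (Φ.comp Ψ).comp ((Φ.comp Ψ).comp ((Φ.comp Ψ).comp (Φ.comp Ψ))) = AlgHom.id ℂ RF ∧
      (Φ.comp Ψ).comp (Φ.comp Ψ) ≠ AlgHom.id ℂ RF := by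
  have hX := Xr_ne_zero
  have hY := Yr_ne_zero
  have hα' := Cr_ne_zero hα
  have hβ' := Cr_ne_zero hβ
  have hΦC (b : ℂ) : Φ (Cr b) = Cr b := Φ.commutes b
  have hΨC (b : ℂ) : Ψ (Cr b) = Cr b := Ψ.commutes b
  have hFx : Φ (Ψ Xr) = Cr α * Yr ^ i / Xr := by rw [hΨx, hΦx]
  have hFy : Φ (Ψ Yr) = Cr β * Cr α ^ j * Yr / Xr ^ j := by
    simp only [hΨy, map_div₀, map_mul, map_zpow₀, hΦC, hΦx, hΦy, div_zpow, mul_zpow, ← zpow_mul,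
      hij]
    field_simp
  refine order_four_of_sq_eq_div _ (c := β ^ i * α ^ 2) (c' := β ^ 2 * α ^ j)
    (by positivity) (by positivity) ?_ ?_
  · have hC : Cr (β ^ i * α ^ 2) = Cr β ^ i * Cr α ^ 2 := by simp [Cr]
    have hji : j * i = 2 := by rw [mul_comm, hij]
    simp only [AlgHom.comp_apply, hFx, map_div₀, map_mul, map_zpow₀, hΦC, hΨC, hFy, div_zpow,
      mul_zpow, ← zpow_mul, hji, hC]
    field_simp
  · have hC : Cr (β ^ 2 * α ^ j) = Cr β ^ 2 * Cr α ^ j := by simp [Cr]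
    simp only [AlgHom.comp_apply, hFy, map_div₀, map_mul, map_zpow₀, hΦC, hΨC, hFx, div_zpow,
      mul_zpow, ← zpow_mul, hij, hC]
    field_simp

theorem order_four_of_system {A L B W U C R D : ℂ} {Φ Ψ : RF →ₐ[ℂ] RF}
    (hN : ¬(A = 0 ∧ L = 0 ∧ B = 0)) (hD : ¬(C = 0 ∧ R = 0 ∧ D = 0))
    (hM : ¬(A = 0 ∧ W = 0 ∧ C = 0)) (hE : ¬(B = 0 ∧ U = 0 ∧ D = 0))
    (hΦx : Φ Xr * Xr * (Cr C + Cr R * Yr + Cr D * Yr ^ 2) = Cr A + Cr L * Yr + Cr B * Yr ^ 2)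
    (hΦy : Φ Yr = Yr) (hΨx : Ψ Xr = Xr)
    (hΨy : Ψ Yr * Yr * (Cr B + Cr U * Xr + Cr D * Xr ^ 2) = Cr A + Cr W * Xr + Cr C * Xr ^ 2)
    (h : (D = 0 ∧ U = 0 ∧ W = 0 ∧ A = 0 ∧ C * B = R * L) ∨
      (C = 0 ∧ U = 0 ∧ W = 0 ∧ B = 0 ∧ D * A = R * L) ∨
      (D = 0 ∧ R = 0 ∧ L = 0 ∧ A = 0 ∧ B * C = U * W) ∨
      (B = 0 ∧ R = 0 ∧ L = 0 ∧ C = 0 ∧ D * A = U * W)) :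
    (Φ.comp Ψ).comp ((Φ.comp Ψ).comp ((Φ.comp Ψ).comp (Φ.comp Ψ))) = AlgHom.id ℂ RF ∧
      (Φ.comp Ψ).comp (Φ.comp Ψ) ≠ AlgHom.id ℂ RF := by
  have hX := Xr_ne_zero
  have hY := Yr_ne_zero
  have h0 : Cr 0 = 0 := map_zero _
  have hmul (b c : ℂ) : Cr (b * c) = Cr b * Cr c := map_mul _ _ _
  have hdiv (b c : ℂ) : Cr (b / c) = Cr b / Cr c := map_div₀ _ _ _
  have hΦden := quadratic_Yr_ne_zero hD
  have hΨden := quadratic_Xr_ne_zero hE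
  rcases h with ⟨rfl, rfl, rfl, rfl, h⟩ | ⟨rfl, rfl, rfl, rfl, h⟩ | ⟨rfl, rfl, rfl, rfl, h⟩ |
    ⟨rfl, rfl, rfl, rfl, h⟩ <;>
    simp only [h0, zero_mul, add_zero, zero_add] at hΦx hΨy hΦden hΨden <;>
    have h' := congrArg Cr h <;>
    simp only [hmul] at h'
  · have hC : C ≠ 0 := by simpa using hM
    have hB : B ≠ 0 := by simpa using hE
    obtain ⟨-, hL⟩ := mul_ne_zero_iff.1 (h ▸ mul_ne_zero hC hB)
    have hC' := Cr_ne_zero hC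
    have hB' := Cr_ne_zero hB
    refine order_four_of_monomial (i := 1) (j := 2) (div_ne_zero hL hC)
      (div_ne_zero hC hB) rfl ?_ hΦy hΨx ?_
    · rw [hdiv]; field_simp
      refine mul_right_cancel₀ hΦden ?_
      linear_combination Cr C * hΦx + Yr ^ 2 * h'
    · refine mul_right_cancel₀ hΨden ?_
      rw [hdiv]; field_simp
      linear_combination hΨy
  · have hD : D ≠ 0 := by simpa using hE
    have hA : A ≠ 0 := by simpa using hM
    obtain ⟨-, hL⟩ := mul_ne_zero_iff.1 (h ▸ mul_ne_zero hD hA)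
    have hD' := Cr_ne_zero hD
    have hA' := Cr_ne_zero hA
    refine order_four_of_monomial (i := -1) (j := -2) (div_ne_zero hL hD)
      (div_ne_zero hA hD) rfl ?_ hΦy hΨx ?_
    · refine mul_right_cancel₀ hΦden ?_
      rw [hdiv]; field_simp
      linear_combination Cr D * hΦx + h'
    · refine mul_right_cancel₀ hΨden ?_
      rw [hdiv]; field_simp
      linear_combination hΨy
  · have hB : B ≠ 0 := by simpa using hN
    have hC : C ≠ 0 := by simpa using hD
    obtain ⟨-, hW⟩ := mul_ne_zero_iff.1 (h ▸ mul_ne_zero hB hC)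
    have hB' := Cr_ne_zero hB
    have hC' := Cr_ne_zero hC
    refine order_four_of_monomial (i := 2) (j := 1) (div_ne_zero hB hC)
      (div_ne_zero hW hB) rfl ?_ hΦy hΨx ?_
    · refine mul_right_cancel₀ hΦden ?_
      rw [hdiv]; field_simp
      linear_combination hΦx
    · rw [hdiv]; field_simp
      refine mul_right_cancel₀ hΨden ?_
      linear_combination Cr B * hΨy + Xr ^ 2 * h'
  · have hD : D ≠ 0 := by simpa using hD
    have hA : A ≠ 0 := by simpa using hN
    obtain ⟨-, hW⟩ := mul_ne_zero_iff.1 (h ▸ mul_ne_zero hD hA)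
    have hD' := Cr_ne_zero hD
    have hA' := Cr_ne_zero hA
    refine order_four_of_monomial (i := -2) (j := -1) (div_ne_zero hA hD)
      (div_ne_zero hW hD) rfl ?_ hΦy hΨx ?_
    · refine mul_right_cancel₀ hΦden ?_
      rw [hdiv]; field_simp
      linear_combination hΦx
    · refine mul_right_cancel₀ hΨden ?_
      rw [hdiv]; field_simp
      linear_combination Cr D * hΨy + h'

theorem systems_of_order_four {A L B W U C R D : ℂ} {Φ Ψ : RF →ₐ[ℂ] RF}
    (hN : ¬(A = 0 ∧ L = 0 ∧ B = 0)) (hD : ¬(C = 0 ∧ R = 0 ∧ D = 0))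
    (hM : ¬(A = 0 ∧ W = 0 ∧ C = 0)) (hE : ¬(B = 0 ∧ U = 0 ∧ D = 0))
    (hΦx : Φ Xr * Xr * (Cr C + Cr R * Yr + Cr D * Yr ^ 2) = Cr A + Cr L * Yr + Cr B * Yr ^ 2)
    (hΦy : Φ Yr = Yr) (hΨx : Ψ Xr = Xr)
    (hΨy : Ψ Yr * Yr * (Cr B + Cr U * Xr + Cr D * Xr ^ 2) = Cr A + Cr W * Xr + Cr C * Xr ^ 2)
    (h4 : (Φ.comp Ψ).comp ((Φ.comp Ψ).comp ((Φ.comp Ψ).comp (Φ.comp Ψ))) = AlgHom.id ℂ RF)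
    (h2 : (Φ.comp Ψ).comp (Φ.comp Ψ) ≠ AlgHom.id ℂ RF) :
    (D = 0 ∧ U = 0 ∧ W = 0 ∧ A = 0 ∧ C * B = R * L) ∨
      (C = 0 ∧ U = 0 ∧ W = 0 ∧ B = 0 ∧ D * A = R * L) ∨
      (D = 0 ∧ R = 0 ∧ L = 0 ∧ A = 0 ∧ B * C = U * W) ∨
      (B = 0 ∧ R = 0 ∧ L = 0 ∧ C = 0 ∧ D * A = U * W) := by
  have hX := Xr_ne_zero
  have hY := Yr_ne_zero
  have hΦC (b : ℂ) : Φ (Cr b) = Cr b := Φ.commutes b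
  have hΨC (b : ℂ) : Ψ (Cr b) = Cr b := Ψ.commutes b
  have hΦN : Φ (Cr A + Cr L * Yr + Cr B * Yr ^ 2) = Cr A + Cr L * Yr + Cr B * Yr ^ 2 := by
    simp [hΦC, hΦy]
  have hΦD : Φ (Cr C + Cr R * Yr + Cr D * Yr ^ 2) = Cr C + Cr R * Yr + Cr D * Yr ^ 2 := by
    simp [hΦC, hΦy]
  have hΨM : Ψ (Cr A + Cr W * Xr + Cr C * Xr ^ 2) = Cr A + Cr W * Xr + Cr C * Xr ^ 2 := by
    simp [hΨC, hΨx]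
  have hΨE : Ψ (Cr B + Cr U * Xr + Cr D * Xr ^ 2) = Cr B + Cr U * Xr + Cr D * Xr ^ 2 := by
    simp [hΨC, hΨx]
  have hΦ (z : RF) : Φ (Φ z) = z := by
    have hx := map_map_eq_self (Φ : RF →+* RF) hΦD hΦN hΦx (quadratic_Yr_ne_zero hN)
    have : Φ.comp Φ = AlgHom.id ℂ RF := algHom_ext_RF hx (by simp [hΦy])
    exact congrArg (· z) this
  have hΨ (z : RF) : Ψ (Ψ z) = z := by
    have hy := map_map_eq_self (Ψ : RF →+* RF) hΨE hΨM hΨy (quadratic_Xr_ne_zero hM)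
    have : Ψ.comp Ψ = AlgHom.id ℂ RF := algHom_ext_RF (by simp [hΨx]) hy
    exact congrArg (· z) this
  obtain ⟨t, ht⟩ : ∃ t, t * (Xr * Yr) = Cr A + Cr L * Yr + Cr B * Yr ^ 2 +
      Xr * (Cr W + Cr U * Yr ^ 2) + Xr ^ 2 * (Cr C + Cr R * Yr + Cr D * Yr ^ 2) :=
    ⟨_, div_mul_cancel₀ _ (mul_ne_zero hX hY)⟩
  have hΦt : Φ t = t := map_eq_self_of_kernel (Φ : RF →+* RF) hΦy hΦN (by simp [hΦC, hΦy]) hΦD hΦx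
    (quadratic_Yr_ne_zero hN) hY ht
  have hΨt : Ψ t = t := map_eq_self_of_kernel (Ψ : RF →+* RF) (x := Yr) (y := Xr)
    (v := Cr L + Cr R * Xr ^ 2) hΨx hΨM (by simp [hΨC, hΨx]) hΨE hΨy
    (quadratic_Xr_ne_zero hM) hX (by linear_combination ht)
  have hker : (kernel A L B W U C R D t).eval Xr Yr = 0 := by
    simp only [kernel, Biquadratic.eval]
    linear_combination -ht
  have hΦne : Xr ≠ Φ Xr := fun h => by
    rw [← h] at hΦx
    have := coeff_eq_zero (c00 := -A) (c10 := 0) (c20 := C) (c01 := -L) (c11 := 0) (c21 := R)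
      (c02 := -B) (c12 := 0) (c22 := D) (by
        simp only [Cr, map_neg, map_zero] at hΦx ⊢
        linear_combination hΦx)
    exact hD ⟨this.1.2.2, this.2.1.2.2, this.2.2.2.2⟩
  have hΨne : Yr ≠ Ψ Yr := fun h => by
    rw [← h] at hΨy
    have := coeff_eq_zero (c00 := -A) (c10 := -W) (c20 := -C) (c01 := 0) (c11 := 0) (c21 := 0)
      (c02 := B) (c12 := U) (c22 := D) (by
        simp only [Cr, map_neg, map_zero] at hΨy ⊢
        linear_combination hΨy)
    exact hE this.2.2
  obtain ⟨hc, hd⟩ := kernel_of_order_four (quadratic_Xr_ne_zero hE) (quadratic_Yr_ne_zero hD) hΦt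
    hΨt hker hΦy hΨx hΦne hΨne hΦ hΨ (fun z => congrArg (· z) h4) h2
  exact systems_of_cayley_eq_zero (transcendental_of_eval_kernel hD hker) hd hc

theorem mul_eq_of_eq_inv_mul_div {F : Type*} [Field F] {x y z a b c d e f : F} (hx : x ≠ 0)
    (hy : y ≠ 0) (hd : d + e * y + f * y ^ 2 ≠ 0)
    (h : z = x⁻¹ * ((a * y⁻¹ + b + c * y) / (d * y⁻¹ + e + f * y))) :
    z * x * (d + e * y + f * y ^ 2) = a + b * y + c * y ^ 2 := by
  have hn : a * y⁻¹ + b + c * y = (a + b * y + c * y ^ 2) / y := by field_simp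
  have hd' : d * y⁻¹ + e + f * y = (d + e * y + f * y ^ 2) / y := by field_simp
  rw [h, hn, hd', div_div_div_cancel_right₀ hy]
  generalize d + e * y + f * y ^ 2 = u at *
  field_simp

theorem statement16 (a : ℤ → ℤ → ℂ) (hInt : Interesting a)
    (Φ Ψ : RF →ₐ[ℂ] RF)
    (hΦx : Φ Xr = Xr⁻¹ *
      ((Cr (a (-1) (-1)) * Yr⁻¹ + Cr (a (-1) 0) + Cr (a (-1) 1) * Yr) /
        (Cr (a 1 (-1)) * Yr⁻¹ + Cr (a 1 0) + Cr (a 1 1) * Yr)))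
    (hΦy : Φ Yr = Yr)
    (hΨx : Ψ Xr = Xr)
    (hΨy : Ψ Yr = Yr⁻¹ *
      ((Cr (a (-1) (-1)) * Xr⁻¹ + Cr (a 0 (-1)) + Cr (a 1 (-1)) * Xr) /
        (Cr (a (-1) 1) * Xr⁻¹ + Cr (a 0 1) + Cr (a 1 1) * Xr))) :
    ((Φ.comp Ψ).comp ((Φ.comp Ψ).comp ((Φ.comp Ψ).comp (Φ.comp Ψ))) = AlgHom.id ℂ RF ∧
        (Φ.comp Ψ).comp (Φ.comp Ψ) ≠ AlgHom.id ℂ RF) ↔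
      (Fam4a a ∨ Fam4b a ∨ Fam4a (fun u v => a v u) ∨ Fam4b (fun u v => a v u)) := by
  obtain ⟨hD, hE, hN, hM⟩ := hInt
  have hΦx' := mul_eq_of_eq_inv_mul_div Xr_ne_zero Yr_ne_zero (quadratic_Yr_ne_zero hD) hΦx
  have hΨy' := mul_eq_of_eq_inv_mul_div Yr_ne_zero Xr_ne_zero (quadratic_Xr_ne_zero hE) hΨy
  exact ⟨fun h => systems_of_order_four hN hD hM hE hΦx' hΦy hΨx hΨy' h.1 h.2,
    order_four_of_system hN hD hM hE hΦx' hΦy hΨx hΨy'⟩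

end
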